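/- Let (F_i)_{i≥0} be the Fibonacci sequence (F_0 = 0, F_1 = 1, F_{i+2} = F_{i+1} + F_i). Let k be a field, A = k[a_1,a_2], ℓ ≥ 4 an integer, and I = (a_1^{F_{ℓ+2}}, a_2^{F_{ℓ+2}}, a_1^{F_ℓ} a_2^{F_{ℓ+1}}). Then the set of sifted degrees of I is SD(I) = {F_2, F_3, F_4, …, F_{ℓ+2}} = {F_i : 2 ≤ i ≤ ℓ+2}; consequently st(I) = ℓ + 1 and rt(I) = F_{ℓ+2}. -/

import Mathlib

/-- The `A`-submodule of homogeneous elements of degree `n` in the kernel `L` of the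
presentation `φ : A[X_1,…,X_r] → A[t]`, `X_i ↦ x_i t`, of the Rees algebra of the ideal
`I = (x_1,…,x_r)`; i.e. the degree-`n` equations `L_n` of the Rees algebra. -/
noncomputable def reesRel {A : Type*} [CommRing A] {r : ℕ} (x : Fin r → A) (n : ℕ) :
    Submodule A (MvPolynomial (Fin r) A) :=
  (RingHom.ker (MvPolynomial.aeval (fun i => Polynomial.C (x i) * Polynomial.X) :
      MvPolynomial (Fin r) A →ₐ[A] Polynomial A)).restrictScalars A
  ⊓ MvPolynomial.homogeneousSubmodule (Fin r) A n

/-- `E(I)_n = 0`, i.e. `L_n = V_1·L_{n-1}`: the degree-`n` equations of the Rees algebra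
are generated by those of degree `n-1`. -/
def reesRelStable {A : Type*} [CommRing A] {r : ℕ} (x : Fin r → A) (n : ℕ) : Prop :=
  reesRel x n = MvPolynomial.homogeneousSubmodule (Fin r) A 1 * reesRel x (n - 1)

/-- The set `SD(I) = {1} ∪ {n ≥ 2 : L_n ≠ V_1·L_{n-1}}` of sifted degrees. -/
def siftedDegrees {A : Type*} [CommRing A] {r : ℕ} (x : Fin r → A) : Set ℕ :=
  {1} ∪ {n : ℕ | 2 ≤ n ∧ ¬ reesRelStable x n}

/-- The sifted type `st(I) = card SD(I)`. -/
noncomputable def siftedType {A : Type*} [CommRing A] {r : ℕ} (x : Fin r → A) : ℕ :=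
  (siftedDegrees x).ncard

/-- The relation type `rt(I)`: the least `s ≥ 1` with `L_n = V_1·L_{n-1}` for all
`n ≥ s+1`. -/
noncomputable def relType {A : Type*} [CommRing A] {r : ℕ} (x : Fin r → A) : ℕ :=
  sInf {s : ℕ | 1 ≤ s ∧ ∀ n, s + 1 ≤ n → reesRelStable x n}

/-!
For an ideal generated by monomials, the equations of degree `n` of the Rees algebra are spanned,
over the coefficient ring, by differences of two terms `a^e X^w` with the same image `a^μ t^n`. Such
a difference lies in `V_1 L_{n-1}` exactly when the two monomials `X^w` are linked by a chain of
monomials of the same fibre in which neighbours share a variable. Hence `L_n = V_1 L_{n-1}` if and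
only if all these fibres are connected.

For `(a₁^N, a₂^N, a₁^p a₂^q)` with `N = p + q`, monomials that share no variable can fail to be
connected only if one of them is the power `X_2^n` of the variable of the mixed generator and the
other is `X_0^i X_1^(n - i)`. A monomial of their fibre linking them amounts to a fraction `c / m`
with `m < n` whose displacement `m p - c N` lies between `0` and `n p - i N`. So `n ≥ 2` is sifted
if and only if it is the denominator of a best one-sided approximation to `p / N`.

For `p / N = F_ℓ / F_(ℓ+2)` the consecutive fractions `F_t / F_(t+2)` have determinant `±1` and
lie on opposite sides of `p / N`. Every other fraction is an integral combination of two of them,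
so that the best denominators are exactly `F_2, …, F_(ℓ+2)`.
-/

open MvPolynomial

section ReesRelations

variable {A : Type*} [CommRing A] {r : ℕ} {x : Fin r → A} {n : ℕ}

theorem aeval_C_mul_X_of_isHomogeneous {f : MvPolynomial (Fin r) A} (hf : f.IsHomogeneous n) :
    aeval (fun i => Polynomial.C (x i) * Polynomial.X) f =
      Polynomial.C (aeval x f) * Polynomial.X ^ n := by
  rw [aeval_def, aeval_def, eval₂_eq', eval₂_eq', map_sum, Finset.sum_mul]
  refine Finset.sum_congr rfl fun w hw => ?_
  have hdeg : w.degree = n := by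
    rw [Finsupp.degree_eq_weight_one]; exact hf (mem_support_iff.mp hw)
  simp only [mul_pow, Finset.prod_mul_distrib, Finset.prod_pow_eq_pow_sum,
    ← Finsupp.degree_eq_sum, hdeg, map_mul, map_prod, map_pow]
  simp [mul_assoc]

theorem mem_reesRel {f : MvPolynomial (Fin r) A} :
    f ∈ reesRel x n ↔ aeval x f = 0 ∧ f.IsHomogeneous n := by
  simp only [reesRel, Submodule.mem_inf, Submodule.restrictScalars_mem, RingHom.mem_ker,
    mem_homogeneousSubmodule]
  refine and_congr_left fun hf => ?_
  rw [aeval_C_mul_X_of_isHomogeneous hf, Polynomial.C_mul_X_pow_eq_monomial,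
    Polynomial.monomial_eq_zero_iff]

variable (x n) in
/-- The submodule `V_1 L_{n-1}` of the equations of degree `n` that come from lower degree. -/
noncomputable def decomposableReesRel : Submodule A (MvPolynomial (Fin r) A) :=
  homogeneousSubmodule (Fin r) A 1 * reesRel x (n - 1)

theorem decomposableReesRel_le_reesRel (hn : 1 ≤ n) :
    decomposableReesRel x n ≤ reesRel x n := by
  refine Submodule.mul_le.mpr fun l hl g hg => mem_reesRel.mpr ⟨?_, ?_⟩
  · rw [map_mul, (mem_reesRel.mp hg).1, mul_zero]
  · simpa only [Nat.add_sub_cancel' hn] using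
      ((mem_homogeneousSubmodule 1 l).mp hl).mul (mem_reesRel.mp hg).2

theorem reesRelStable_iff_reesRel_le (hn : 1 ≤ n) :
    reesRelStable x n ↔ reesRel x n ≤ decomposableReesRel x n :=
  ⟨fun h => h.le, fun h => h.antisymm (decomposableReesRel_le_reesRel hn)⟩

theorem X_mul_mem_decomposableReesRel (i : Fin r) {g : MvPolynomial (Fin r) A}
    (hg : g ∈ reesRel x (n - 1)) : X i * g ∈ decomposableReesRel x n :=
  Submodule.mul_mem_mul ((mem_homogeneousSubmodule 1 (X i)).mpr (isHomogeneous_X A i)) hg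

theorem map_eq_zero_of_mem_decomposableReesRel {M : Type*} [AddCommGroup M]
    (F : MvPolynomial (Fin r) A →+ M) (hF : ∀ i, ∀ g ∈ reesRel x (n - 1), F (X i * g) = 0)
    {f : MvPolynomial (Fin r) A} (hf : f ∈ decomposableReesRel x n) : F f = 0 := by
  induction hf using Submodule.mul_induction_on' with
  | mem_mul_mem l hl g hg =>
    rw [homogeneousSubmodule_one_eq_span_X] at hl
    induction hl using Submodule.span_induction generalizing g with
    | mem _ hX => obtain ⟨i, rfl⟩ := hX; exact hF i g hg
    | zero => rw [zero_mul, map_zero]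
    | add l₁ l₂ _ _ h₁ h₂ => rw [add_mul, map_add, h₁ g hg, h₂ g hg, add_zero]
    | smul a l _ h => rw [smul_mul_assoc, ← mul_smul_comm]; exact h _ (Submodule.smul_mem _ a hg)
  | add f₁ _ f₂ _ h₁ h₂ => rw [map_add, h₁, h₂, add_zero]

theorem relType_eq_of_isGreatest_siftedDegrees {s : ℕ} (hs : IsGreatest (siftedDegrees x) s) :
    relType x = s := by
  have one_le : 1 ≤ s := hs.2 (Or.inl rfl)
  refine IsLeast.csInf_eq ⟨⟨one_le, fun n hn => ?_⟩, fun t ⟨ht, hstable⟩ => ?_⟩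
  · by_contra hunstable
    have : n ≤ s := hs.2 (Or.inr ⟨by omega, hunstable⟩)
    omega
  · by_contra! hlt
    rcases hs.1 with hs | ⟨-, hunstable⟩
    · rw [Set.mem_singleton_iff] at hs
      omega
    · exact hunstable (hstable s hlt)

end ReesRelations

section FibreGraph

variable {σ τ : Type*} {d : σ → τ →₀ ℕ} {n : ℕ} {μ : τ →₀ ℕ}

/-- Two exponent vectors meet if the corresponding monomials share a variable. -/
def Meets (v w : σ →₀ ℕ) : Prop := ∃ i, 0 < v i ∧ 0 < w i

theorem Meets.symm {v w : σ →₀ ℕ} (h : Meets v w) : Meets w v :=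
  h.imp fun _ => And.symm

theorem meets_single_one_add (i : σ) (v w : σ →₀ ℕ) :
    Meets (Finsupp.single i 1 + v) (Finsupp.single i 1 + w) :=
  ⟨i, by simp, by simp⟩

theorem exists_eq_single_one_add {i : σ} {w : σ →₀ ℕ} (h : 0 < w i) :
    ∃ v, w = Finsupp.single i 1 + v :=
  exists_add_of_le (Finsupp.single_le_iff.mpr h)

/-- The fibre of degree `n` and multidegree `μ` of the monomial ideal with exponents `d`: the
monomials `X^w` of degree `n` with a multiple `a^e X^w` that maps to `a^μ t^n` in the Rees
algebra. Encoded by the exponents `w`, as `e = μ - weight d w` is determined by `w`. -/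
def fibre (d : σ → τ →₀ ℕ) (n : ℕ) (μ : τ →₀ ℕ) : Set (σ →₀ ℕ) :=
  {w | w.degree = n ∧ Finsupp.weight d w ≤ μ}

theorem single_one_add_mem_fibre_iff {i : σ} {w : σ →₀ ℕ} :
    Finsupp.single i 1 + w ∈ fibre d n μ ↔
      1 + w.degree = n ∧ d i + Finsupp.weight d w ≤ μ := by
  simp [fibre, Finsupp.weight_single]

/-- The graph on a fibre in which two monomials are adjacent when they share a variable: its
connectedness in all multidegrees decides whether `L_n = V_1 L_{n-1}`. -/
def fibreGraph (d : σ → τ →₀ ℕ) (n : ℕ) (μ : τ →₀ ℕ) : SimpleGraph (fibre d n μ) where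
  Adj v w := v ≠ w ∧ Meets v.1 w.1
  symm := ⟨fun _ _ h => ⟨h.1.symm, h.2.symm⟩⟩
  loopless := ⟨fun _ h => h.1 rfl⟩

theorem fibreGraph_reachable_of_meets {v w : fibre d n μ} (h : Meets v.1 w.1) :
    (fibreGraph d n μ).Reachable v w := by
  by_cases hvw : v = w
  · exact hvw ▸ .rfl
  · exact SimpleGraph.Adj.reachable ⟨hvw, h⟩

end FibreGraph

section MonomialIdeal

variable {R τ : Type*} [CommRing R] {r : ℕ} {d : Fin r → τ →₀ ℕ} {n : ℕ} {μ : τ →₀ ℕ}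

variable (R) in
/-- The generators `a^(d i)` of a monomial ideal, given by their exponent vectors. -/
noncomputable def monomialFamily (d : Fin r → τ →₀ ℕ) (i : Fin r) : MvPolynomial τ R :=
  monomial (d i) 1

theorem aeval_monomialFamily_monomial (w : Fin r →₀ ℕ) (c : MvPolynomial τ R) :
    aeval (monomialFamily R d) (monomial w c) = c * monomial (Finsupp.weight d w) 1 := by
  rw [aeval_monomial, Algebra.algebraMap_self, RingHom.id_apply, Finsupp.prod_fintype _ _ (by simp),
    Finsupp.weight_eq_sum, monomial_sum_one]
  simp [monomialFamily, monomial_pow]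

variable (R) in
/-- The multiple `a^e X^w` that maps to `a^μ t^n` in the Rees algebra, for `w` in `fibre d n μ`.
Outside the fibre the truncated subtraction makes it meaningless. -/
noncomputable def fibreTerm (d : Fin r → τ →₀ ℕ) (μ : τ →₀ ℕ) (w : Fin r →₀ ℕ) :
    MvPolynomial (Fin r) (MvPolynomial τ R) :=
  monomial w (monomial (μ - Finsupp.weight d w) 1)

theorem aeval_fibreTerm {w : Fin r →₀ ℕ} (hw : Finsupp.weight d w ≤ μ) :
    aeval (monomialFamily R d) (fibreTerm R d μ w) = monomial μ 1 := by
  rw [fibreTerm, aeval_monomialFamily_monomial, monomial_mul, tsub_add_cancel_of_le hw, one_mul]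

theorem fibreTerm_single_one_add (i : Fin r) (w : Fin r →₀ ℕ) :
    fibreTerm R d μ (Finsupp.single i 1 + w) = X i * fibreTerm R d (μ - d i) w := by
  rw [fibreTerm, fibreTerm, X, monomial_mul, one_mul, map_add, Finsupp.weight_single, one_smul,
    tsub_tsub]

theorem fibreTerm_sub_fibreTerm_mem_reesRel {v w : Fin r →₀ ℕ}
    (hv : v ∈ fibre d n μ) (hw : w ∈ fibre d n μ) :
    fibreTerm R d μ v - fibreTerm R d μ w ∈ reesRel (monomialFamily R d) n := by
  refine mem_reesRel.mpr ⟨?_, ?_⟩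
  · rw [map_sub, aeval_fibreTerm hv.2, aeval_fibreTerm hw.2, sub_self]
  · exact (isHomogeneous_monomial _ hv.1).sub (isHomogeneous_monomial _ hw.1)

theorem fibreTerm_sub_fibreTerm_mem_of_meets {v w : Fin r →₀ ℕ}
    (hv : v ∈ fibre d n μ) (hw : w ∈ fibre d n μ) (h : Meets v w) :
    fibreTerm R d μ v - fibreTerm R d μ w ∈
      decomposableReesRel (monomialFamily R d) n := by
  obtain ⟨i, hvi, hwi⟩ := h
  obtain ⟨v, rfl⟩ := exists_eq_single_one_add hvi
  obtain ⟨w, rfl⟩ := exists_eq_single_one_add hwi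
  have mem_fibre_of_single_one_add {u : Fin r →₀ ℕ} (hu : Finsupp.single i 1 + u ∈ fibre d n μ) :
      u ∈ fibre d (n - 1) (μ - d i) := by
    obtain ⟨hdeg, hle⟩ := single_one_add_mem_fibre_iff.mp hu
    exact ⟨by omega, le_tsub_of_add_le_left hle⟩
  rw [fibreTerm_single_one_add, fibreTerm_single_one_add, ← mul_sub]
  exact X_mul_mem_decomposableReesRel i (fibreTerm_sub_fibreTerm_mem_reesRel
    (mem_fibre_of_single_one_add hv) (mem_fibre_of_single_one_add hw))

theorem fibreTerm_sub_fibreTerm_mem_of_reachable {v w : fibre d n μ}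
    (h : (fibreGraph d n μ).Reachable v w) :
    fibreTerm R d μ v - fibreTerm R d μ w ∈
      decomposableReesRel (monomialFamily R d) n := by
  rw [SimpleGraph.reachable_iff_reflTransGen] at h
  induction h with
  | refl => rw [sub_self]; exact Submodule.zero_mem _
  | @tail u w _ huw ih =>
    rw [← sub_add_sub_cancel _ (fibreTerm R d μ u)]
    exact Submodule.add_mem _ ih (fibreTerm_sub_fibreTerm_mem_of_meets u.2 w.2 huw.2)

theorem reesRel_le_of_fibreTerm_sub_fibreTerm_mem
    {M : Submodule (MvPolynomial τ R) (MvPolynomial (Fin r) (MvPolynomial τ R))}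
    (hM : ∀ μ, ∀ v w : fibre d n μ, fibreTerm R d μ v - fibreTerm R d μ w ∈ M) :
    reesRel (monomialFamily R d) n ≤ M := by
  intro f hf
  -- Modulo `M` all terms of multidegree `μ` agree with a fixed one, `b μ`, so `f` is congruent to
  -- the value of the linear map `ρ : a^μ ↦ b μ` at the image of `f`, which is zero.
  have hb (μ : τ →₀ ℕ) : ∃ b, ∀ w ∈ fibre d n μ, fibreTerm R d μ w - b ∈ M := by
    rcases (fibre d n μ).eq_empty_or_nonempty with hempty | ⟨v, hv⟩
    · exact ⟨0, fun w hw => absurd hw (hempty ▸ Set.notMem_empty w)⟩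
    · exact ⟨fibreTerm R d μ v, fun w hw => hM μ ⟨w, hw⟩ ⟨v, hv⟩⟩
  choose b hb using hb
  let ρ : MvPolynomial τ R →ₗ[R] MvPolynomial (Fin r) (MvPolynomial τ R) :=
    (basisMonomials τ R).constr R b
  have hρ (μ : τ →₀ ℕ) : ρ (monomial μ 1) = b μ :=
    (basisMonomials τ R).constr_basis R b μ
  have monomial_sub_mem (w : Fin r →₀ ℕ) (hw : w.degree = n) (c : MvPolynomial τ R) :
      monomial w c - ρ (c * monomial (Finsupp.weight d w) 1) ∈ M := by
    induction c using MvPolynomial.induction_on' with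
    | monomial e a =>
      have hterm := hb (e + Finsupp.weight d w) w ⟨hw, le_add_self⟩
      rw [fibreTerm, add_tsub_cancel_right] at hterm
      have hsmul : monomial e a = a • monomial e (1 : R) := by
        rw [smul_monomial, smul_eq_mul, mul_one]
      rw [hsmul, ← smul_monomial, smul_mul_assoc, monomial_mul, one_mul, map_smul, hρ, ← smul_sub]
      exact M.smul_of_tower_mem a hterm
    | add c₁ c₂ h₁ h₂ =>
      rw [map_add, add_mul, map_add, add_sub_add_comm]
      exact M.add_mem h₁ h₂
  obtain ⟨haeval, hhom⟩ := mem_reesRel.mp hf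
  have f_eq : f = f - ρ (aeval (monomialFamily R d) f) := by rw [haeval, map_zero, sub_zero]
  rw [f_eq, f.as_sum, map_sum, map_sum, ← Finset.sum_sub_distrib]
  refine M.sum_mem fun w hw => ?_
  rw [aeval_monomialFamily_monomial]
  exact monomial_sub_mem w (hhom.degree_eq_sum_deg_support hw).symm _

theorem reesRelStable_of_fibreGraph_preconnected (hn : 1 ≤ n)
    (h : ∀ μ, (fibreGraph d n μ).Preconnected) : reesRelStable (monomialFamily R d) n := by
  refine (reesRelStable_iff_reesRel_le hn).mpr ?_
  exact reesRel_le_of_fibreTerm_sub_fibreTerm_mem fun μ v w =>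
    fibreTerm_sub_fibreTerm_mem_of_reachable (h μ v w)

variable (R) in
/-- For a set `C` of exponent vectors, the map `f ↦ aeval f` with only the monomials in `C` kept.
Its coefficient at `a^μ`, for `C` a connected component of a fibre, vanishes on `V_1 L_{n-1}`. -/
noncomputable def restrictedAeval (d : Fin r → τ →₀ ℕ) (C : Set (Fin r →₀ ℕ)) :
    MvPolynomial (Fin r) (MvPolynomial τ R) →ₗ[MvPolynomial τ R] MvPolynomial τ R :=
  (basisMonomials (Fin r) (MvPolynomial τ R)).constr (MvPolynomial τ R)
    (C.indicator fun w => monomial (Finsupp.weight d w) 1)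

theorem restrictedAeval_monomial (C : Set (Fin r →₀ ℕ)) (w : Fin r →₀ ℕ) (c : MvPolynomial τ R) :
    restrictedAeval R d C (monomial w c) =
      C.indicator (fun w => c * monomial (Finsupp.weight d w) 1) w := by
  have restrictedAeval_monomial_one :
      restrictedAeval R d C (monomial w 1) =
        C.indicator (fun w => monomial (Finsupp.weight d w) 1) w :=
    (basisMonomials (Fin r) (MvPolynomial τ R)).constr_basis (MvPolynomial τ R) _ w
  have hc : (monomial w c : MvPolynomial (Fin r) (MvPolynomial τ R)) = c • monomial w 1 := by
    rw [smul_monomial, smul_eq_mul, mul_one]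
  rw [hc, map_smul, smul_eq_mul, restrictedAeval_monomial_one]
  exact (Set.indicator_const_smul_apply C c _ w).symm

/-- The exponents in the connected component of `v` in its fibre. -/
def fibreComponent (v : fibre d n μ) : Set (Fin r →₀ ℕ) :=
  (↑) '' {w | (fibreGraph d n μ).Reachable v w}

theorem coe_mem_fibreComponent_iff {v w : fibre d n μ} :
    ↑w ∈ fibreComponent v ↔ (fibreGraph d n μ).Reachable v w :=
  Subtype.val_injective.mem_set_image

theorem single_one_add_mem_fibreComponent {v₀ : fibre d n μ} {i : Fin r} {u w : Fin r →₀ ℕ}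
    (hu : Finsupp.single i 1 + u ∈ fibreComponent v₀)
    (hw : Finsupp.single i 1 + w ∈ fibre d n μ) :
    Finsupp.single i 1 + w ∈ fibreComponent v₀ := by
  obtain ⟨u', hreach, hu'⟩ := hu
  refine ⟨⟨_, hw⟩, hreach.trans (fibreGraph_reachable_of_meets ?_), rfl⟩
  rw [hu']
  exact meets_single_one_add i u w

theorem degree_eq_of_mem_fibreComponent {v₀ : fibre d n μ} {w : Fin r →₀ ℕ}
    (hw : w ∈ fibreComponent v₀) : w.degree = n := by
  obtain ⟨w, -, rfl⟩ := hw
  exact w.2.1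

-- All monomials of a fibre that are divisible by `X i` lie in one component: either the component
-- of `v₀` contains none of them, or it contains all that contribute to `aeval (X i * g) = 0`.
theorem coeff_restrictedAeval_X_mul (v₀ : fibre d n μ) (i : Fin r)
    {g : MvPolynomial (Fin r) (MvPolynomial τ R)}
    (hg : g ∈ reesRel (monomialFamily R d) (n - 1)) :
    coeff μ (restrictedAeval R d (fibreComponent v₀) (X i * g)) = 0 := by
  classical
  obtain ⟨haeval, hhom⟩ := mem_reesRel.mp hg
  have X_mul_eq_sum : X i * g = ∑ w ∈ g.support, monomial (Finsupp.single i 1 + w) (coeff w g) := by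
    conv_lhs => rw [g.as_sum, Finset.mul_sum]
    exact Finset.sum_congr rfl fun w _ => by rw [X, monomial_mul, one_mul]
  by_cases hC : ∃ u, Finsupp.single i 1 + u ∈ fibreComponent v₀
  · obtain ⟨u, hu⟩ := hC
    have hn : 1 + u.degree = n := by
      simpa only [map_add, Finsupp.degree_single] using degree_eq_of_mem_fibreComponent hu
    have haeval_X_mul : coeff μ (aeval (monomialFamily R d) (X i * g)) = 0 := by
      rw [map_mul, haeval, mul_zero, coeff_zero]
    rw [← haeval_X_mul, X_mul_eq_sum, map_sum, map_sum, coeff_sum, coeff_sum]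
    refine Finset.sum_congr rfl fun w hw => ?_
    rw [restrictedAeval_monomial, aeval_monomialFamily_monomial]
    by_cases hwC : Finsupp.single i 1 + w ∈ fibreComponent v₀
    · rw [Set.indicator_of_mem hwC]
    · have hnle : ¬ Finsupp.weight d (Finsupp.single i 1 + w) ≤ μ := fun hle => by
        have hdeg := hhom.degree_eq_sum_deg_support hw
        refine hwC (single_one_add_mem_fibreComponent hu ⟨?_, hle⟩)
        rw [map_add, Finsupp.degree_single, Finsupp.degree_apply]
        omega
      rw [Set.indicator_of_notMem hwC, coeff_zero, coeff_mul_monomial', if_neg hnle]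
  · rw [X_mul_eq_sum, map_sum, coeff_sum]
    refine Finset.sum_eq_zero fun w _ => ?_
    rw [restrictedAeval_monomial, Set.indicator_of_notMem (not_exists.mp hC w), coeff_zero]

theorem coeff_restrictedAeval_fibreTerm {C : Set (Fin r →₀ ℕ)} {w : Fin r →₀ ℕ}
    (hw : Finsupp.weight d w ≤ μ) :
    coeff μ (restrictedAeval R d C (fibreTerm R d μ w)) = C.indicator 1 w := by
  classical
  rw [fibreTerm, restrictedAeval_monomial]
  by_cases hwC : w ∈ C
  · rw [Set.indicator_of_mem hwC, Set.indicator_of_mem hwC, monomial_mul, tsub_add_cancel_of_le hw,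
      one_mul, coeff_monomial, if_pos rfl, Pi.one_apply]
  · rw [Set.indicator_of_notMem hwC, Set.indicator_of_notMem hwC, coeff_zero]

theorem fibreGraph_preconnected_of_reesRelStable [Nontrivial R]
    (h : reesRelStable (monomialFamily R d) n) : (fibreGraph d n μ).Preconnected := by
  intro v w
  by_contra hvw
  have hmem := fibreTerm_sub_fibreTerm_mem_reesRel (R := R) v.2 w.2
  rw [h] at hmem
  have hzero : coeff μ (restrictedAeval R d (fibreComponent v)
      (fibreTerm R d μ v - fibreTerm R d μ w)) = 0 :=
    map_eq_zero_of_mem_decomposableReesRel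
      ((lcoeff R μ).toAddMonoidHom.comp (restrictedAeval R d (fibreComponent v)).toAddMonoidHom)
      (fun i g hg => coeff_restrictedAeval_X_mul v i hg) hmem
  rw [map_sub, coeff_sub, coeff_restrictedAeval_fibreTerm v.2.2,
    coeff_restrictedAeval_fibreTerm w.2.2,
    Set.indicator_of_mem (coe_mem_fibreComponent_iff.mpr .rfl),
    Set.indicator_of_notMem (mt coe_mem_fibreComponent_iff.mp hvw), sub_zero] at hzero
  exact one_ne_zero hzero

theorem reesRelStable_monomialFamily_iff [Nontrivial R] (hn : 1 ≤ n) :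
    reesRelStable (monomialFamily R d) n ↔ ∀ μ, (fibreGraph d n μ).Preconnected :=
  ⟨fun h _ => fibreGraph_preconnected_of_reesRelStable h,
    reesRelStable_of_fibreGraph_preconnected hn⟩

end MonomialIdeal

section BestDenominators

variable {p N m₁ c₁ m₂ c₂ n : ℤ}

/-- `n` is the denominator of a best one-sided approximation `i / n` to `p / N`: no fraction `c / m`
with `m < n` has its displacement `m p - c N` between `0` and the displacement of `i / n`. -/
def IsOneSidedBestDenominator (p N n : ℤ) : Prop :=
  ∃ i : ℤ, ∀ m c : ℤ, 0 < m → m < n → m * p - c * N ∉ Set.uIcc 0 (n * p - i * N)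

theorem isOneSidedBestDenominator_one (p N : ℤ) : IsOneSidedBestDenominator p N 1 :=
  ⟨0, fun m _ hm hm' => by omega⟩

theorem not_isOneSidedBestDenominator_of_lt (hN : 0 < N) (hn : N < n) :
    ¬ IsOneSidedBestDenominator p N n := fun ⟨_, h⟩ =>
  h N p hN hn (by rw [mul_comm N, sub_self]; exact Set.left_mem_uIcc)

theorem exists_displacement_eq_add_of_isUnit_det (hdet : IsUnit (m₁ * c₂ - m₂ * c₁))
    (p N m c : ℤ) : ∃ u v, m = u * m₁ + v * m₂ ∧
      m * p - c * N = u * (m₁ * p - c₁ * N) + v * (m₂ * p - c₂ * N) := by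
  obtain ⟨e, he⟩ := isUnit_iff_exists_inv'.mp hdet
  refine ⟨e * (m * c₂ - c * m₂), e * (m₁ * c - c₁ * m), ?_, ?_⟩
  · linear_combination -m * he
  · linear_combination (c * N - m * p) * he

theorem mem_uIcc_zero_add_of_mul_nonpos {x y u v : ℤ} (hxy : x * y ≤ 0) (hu : 1 ≤ u) (hv : v ≤ 0) :
    x ∈ Set.uIcc 0 (u * x + v * y) := by
  rw [Set.mem_uIcc]
  rcases mul_nonpos_iff.mp hxy with ⟨hx, hy⟩ | ⟨hx, hy⟩
  · exact .inl ⟨hx, by nlinarith⟩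
  · exact .inr ⟨by nlinarith, hx⟩

theorem notMem_uIcc_zero_of_mul_nonpos {x y u v : ℤ} (hx : x ≠ 0) (hxy : x * y ≤ 0)
    (h : 1 ≤ u ∧ v ≤ 0 ∨ u ≤ -1 ∧ 1 ≤ v) : u * x + v * y ∉ Set.uIcc 0 y := by
  rw [Set.mem_uIcc]
  rcases h with ⟨hu, hv⟩ | ⟨hu, hv⟩ <;> rcases mul_nonpos_iff.mp hxy with ⟨hx', hy⟩ | ⟨hx', hy⟩ <;>
    rintro (⟨h₁, h₂⟩ | ⟨h₁, h₂⟩) <;> apply hx <;> nlinarith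

theorem isOneSidedBestDenominator_of_isUnit_det (hdet : IsUnit (m₁ * c₂ - m₂ * c₁)) (hm₁ : 0 < m₁)
    (h₁ : m₁ * p - c₁ * N ≠ 0) (h₁₂ : (m₁ * p - c₁ * N) * (m₂ * p - c₂ * N) ≤ 0) :
    IsOneSidedBestDenominator p N m₂ := by
  refine ⟨c₂, fun m c hm hm₂ => ?_⟩
  obtain ⟨u, v, huv, hdispl⟩ := exists_displacement_eq_add_of_isUnit_det hdet p N m c
  rw [hdispl]
  refine notMem_uIcc_zero_of_mul_nonpos h₁ h₁₂ ?_
  rcases le_or_gt v 0 with hv | hv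
  · refine .inl ⟨?_, hv⟩
    by_contra! hu
    nlinarith
  · refine .inr ⟨?_, hv⟩
    by_contra! hu
    nlinarith

theorem not_isOneSidedBestDenominator_of_isUnit_det (hdet : IsUnit (m₁ * c₂ - m₂ * c₁))
    (hm₁ : 0 < m₁) (hm₂ : 0 < m₂) (h₁₂ : (m₁ * p - c₁ * N) * (m₂ * p - c₂ * N) ≤ 0)
    (hn₁ : m₁ < n) (hn₂ : m₂ < n) (hn : n < m₁ + m₂) : ¬ IsOneSidedBestDenominator p N n := by
  rintro ⟨c, hc⟩
  obtain ⟨u, v, huv, hdispl⟩ := exists_displacement_eq_add_of_isUnit_det hdet p N n c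
  rcases le_or_gt u 0 with hu | hu
  · have hv : 1 ≤ v := by
      by_contra! hv
      nlinarith
    apply hc m₂ c₂ hm₂ hn₂
    rw [hdispl, add_comm]
    exact mem_uIcc_zero_add_of_mul_nonpos (mul_comm (m₁ * p - c₁ * N) _ ▸ h₁₂) hv hu
  · have hv : v ≤ 0 := by
      by_contra! hv
      nlinarith
    apply hc m₁ c₁ hm₁ hn₁
    rw [hdispl]
    exact mem_uIcc_zero_add_of_mul_nonpos h₁₂ hu hv

end BestDenominators

section Bridges

variable {σ τ : Type*} {d : σ → τ →₀ ℕ} {n : ℕ} {v w : σ →₀ ℕ}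

/-- A monomial of degree `n` that meets both `X^v` and `X^w` and lies in every fibre containing
both of them. -/
def HasBridge (d : σ → τ →₀ ℕ) (n : ℕ) (v w : σ →₀ ℕ) : Prop :=
  ∃ u, u.degree = n ∧ Meets v u ∧ Meets w u ∧
    Finsupp.weight d u ≤ Finsupp.weight d v ⊔ Finsupp.weight d w

theorem HasBridge.symm (h : HasBridge d n v w) : HasBridge d n w v := by
  obtain ⟨u, hdeg, hvu, hwu, hle⟩ := h
  exact ⟨u, hdeg, hwu, hvu, sup_comm (Finsupp.weight d v) _ ▸ hle⟩

theorem hasBridge_of_meets (hv : v.degree = n) (h : Meets v w) : HasBridge d n v w :=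
  ⟨v, hv, h.imp fun _ hi => ⟨hi.1, hi.1⟩, h.symm, le_sup_left⟩

theorem fibreGraph_preconnected_of_hasBridge {μ : τ →₀ ℕ}
    (h : ∀ v w : σ →₀ ℕ, v.degree = n → w.degree = n → HasBridge d n v w) :
    (fibreGraph d n μ).Preconnected := by
  intro v w
  obtain ⟨u, hdeg, hvu, hwu, hle⟩ := h v w v.2.1 w.2.1
  let u' : fibre d n μ := ⟨u, hdeg, hle.trans (sup_le v.2.2 w.2.2)⟩
  have hvu' : (fibreGraph d n μ).Reachable v u' := fibreGraph_reachable_of_meets hvu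
  have huw' : (fibreGraph d n μ).Reachable u' w := fibreGraph_reachable_of_meets hwu.symm
  exact hvu'.trans huw'

theorem hasBridge_single {i t : σ} (hn : 2 ≤ n) (ht : 0 < w t)
    (hd : ∀ z, d t z ≤ d i z ∨ d i z = 0) : HasBridge d n (Finsupp.single i n) w := by
  refine ⟨Finsupp.single i (n - 1) + Finsupp.single t 1, ?_, ⟨i, ?_, ?_⟩, ⟨t, ht, ?_⟩, fun z => ?_⟩
  · rw [map_add, Finsupp.degree_single, Finsupp.degree_single]
    omega
  · rw [Finsupp.single_eq_same]
    omega
  · rw [Finsupp.add_apply, Finsupp.single_eq_same]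
    omega
  · rw [Finsupp.add_apply, Finsupp.single_eq_same]
    omega
  have hn' : n = n - 1 + 1 := by omega
  simp only [map_add, Finsupp.weight_single, one_smul, Finsupp.add_apply, Finsupp.smul_apply,
    smul_eq_mul, Finsupp.sup_apply, le_sup_iff]
  rcases hd z with hle | hzero
  · left
    calc (n - 1) * d i z + d t z ≤ (n - 1) * d i z + d i z := by gcongr
      _ = (n - 1 + 1) * d i z := (Nat.succ_mul _ _).symm
      _ = n * d i z := by rw [← hn']
  · right
    rw [hzero, mul_zero, zero_add]
    exact Finsupp.le_weight_of_ne_zero' d ht.ne' z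

end Bridges

section ThreeGenerators

variable {p q n : ℕ}

/-- The exponents of the ideal `(a₁^(p+q), a₂^(p+q), a₁^p a₂^q)`. -/
noncomputable def mixedPowerExponents (p q : ℕ) : Fin 3 → Fin 2 →₀ ℕ :=
  ![Finsupp.single 0 (p + q), Finsupp.single 1 (p + q), Finsupp.single 0 p + Finsupp.single 1 q]

theorem weight_mixedPowerExponents_zero (w : Fin 3 →₀ ℕ) :
    Finsupp.weight (mixedPowerExponents p q) w 0 = (p + q) * w 0 + p * w 2 := by
  simp [Finsupp.weight_eq_sum, Fin.sum_univ_three, mixedPowerExponents, mul_comm, add_mul]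

theorem weight_mixedPowerExponents_one (w : Fin 3 →₀ ℕ) :
    Finsupp.weight (mixedPowerExponents p q) w 1 = (p + q) * w 1 + q * w 2 := by
  simp [Finsupp.weight_eq_sum, Fin.sum_univ_three, mixedPowerExponents, mul_comm, add_mul]

theorem weight_mixedPowerExponents_le_iff {u : Fin 3 →₀ ℕ} {μ : Fin 2 →₀ ℕ} :
    Finsupp.weight (mixedPowerExponents p q) u ≤ μ ↔
      (p + q) * u 0 + p * u 2 ≤ μ 0 ∧ (p + q) * u 1 + q * u 2 ≤ μ 1 := by
  rw [Finsupp.le_def, Fin.forall_fin_two, weight_mixedPowerExponents_zero,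
    weight_mixedPowerExponents_one]

theorem exists_finsupp_fin_three (a b c : ℕ) :
    ∃ w : Fin 3 →₀ ℕ, w 0 = a ∧ w 1 = b ∧ w 2 = c :=
  ⟨Finsupp.equivFunOnFinite.symm ![a, b, c], rfl, rfl, rfl⟩

theorem degree_fin_three (w : Fin 3 →₀ ℕ) : w.degree = w 0 + w 1 + w 2 := by
  rw [Finsupp.degree_eq_sum, Fin.sum_univ_three]

-- The bridge between `X_0^i X_1^j` and `X_2^(i+j)` is `X_0^(i-c) X_1^(j-m+c) X_2^m`, except when
-- `X_1 X_2^(i+j-1)` already lies in their fibre.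
theorem exists_bridge_of_displacement_le {i j : ℕ} {m c : ℤ} (hi : 0 < i) (hj : 0 < j)
    (hm : 0 < m) (hmn : m < i + j) (h₀ : 0 ≤ m * p - c * (p + q))
    (h₁ : m * p - c * (p + q) ≤ (i + j) * p - i * (p + q)) :
    ∃ a b e : ℕ, a + b + e = i + j ∧ 0 < a + b ∧ 0 < e ∧
      (p + q) * a + p * e ≤ p * (i + j) ∧ (p + q) * b + q * e ≤ (p + q) * j := by
  obtain ⟨n, hn⟩ : ∃ n, i + j = n + 1 := ⟨i + j - 1, by omega⟩
  rcases le_or_gt ((p + q) * i) (p * n) with hle | hlt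
  · refine ⟨0, 1, n, by omega, by omega, by omega, by nlinarith, by nlinarith⟩
  zify at hlt
  have hpn : m * p ≤ n * (p : ℤ) := by
    gcongr
    omega
  have hci : c < i :=
    lt_of_mul_lt_mul_right (by linarith : c * (p + q) < i * (p + q)) (by positivity)
  have hic : i - c ≤ i + j - m := by
    by_contra! hlt'
    nlinarith
  obtain ⟨a, ha⟩ := Int.eq_ofNat_of_zero_le (sub_nonneg.mpr hci.le)
  obtain ⟨b, hb⟩ := Int.eq_ofNat_of_zero_le (sub_nonneg.mpr hic)
  lift m to ℕ using hm.le
  refine ⟨a, b, m, by omega, by omega, by omega, ?_, ?_⟩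
  · zify
    rw [← ha]
    linarith
  · zify
    rw [← hb]
    linarith

theorem exists_bridge_of_displacement_mem_uIcc {i j : ℕ} {m c : ℤ} (hi : 0 < i) (hj : 0 < j)
    (hm : 0 < m) (hmn : m < i + j)
    (hmem : m * p - c * (p + q) ∈ Set.uIcc 0 ((i + j) * p - i * (p + q) : ℤ)) :
    ∃ a b e : ℕ, a + b + e = i + j ∧ 0 < a + b ∧ 0 < e ∧
      (p + q) * a + p * e ≤ max ((p + q) * i) (p * (i + j)) ∧
      (p + q) * b + q * e ≤ max ((p + q) * j) (q * (i + j)) := by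
  rcases Set.mem_uIcc.mp hmem with ⟨h₀, h₁⟩ | ⟨h₁, h₀⟩
  · obtain ⟨a, b, e, hsum, hab, he, ha, hb⟩ :=
      exists_bridge_of_displacement_le hi hj hm hmn h₀ h₁
    exact ⟨a, b, e, hsum, hab, he, ha.trans (le_max_right _ _), hb.trans (le_max_left _ _)⟩
  · obtain ⟨b, a, e, hsum, hab, he, hb, ha⟩ := exists_bridge_of_displacement_le (p := q) (q := p)
      (c := m - c) hj hi hm (by linarith) (by linarith) (by linarith)
    rw [add_comm q, add_comm j] at hb
    rw [add_comm q] at ha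
    exact ⟨a, b, e, by omega, by omega, he, ha.trans (le_max_left _ _), hb.trans (le_max_right _ _)⟩

theorem hasBridge_single_two {w : Fin 3 →₀ ℕ} (hw : w.degree = n) (h₀ : 0 < w 0) (h₁ : 0 < w 1)
    (h₂ : w 2 = 0) (hn : ¬ IsOneSidedBestDenominator p (p + q) n) :
    HasBridge (mixedPowerExponents p q) n w (Finsupp.single 2 n) := by
  rw [degree_fin_three, h₂, add_zero] at hw
  subst hw
  simp only [IsOneSidedBestDenominator, not_exists, not_forall, not_not] at hn
  obtain ⟨m, c, hm, hmn, hmem⟩ := hn (w 0)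
  push_cast at hmn hmem
  obtain ⟨a, b, e, hsum, hab, he, ha, hb⟩ :=
    exists_bridge_of_displacement_mem_uIcc h₀ h₁ hm hmn hmem
  obtain ⟨u, rfl, rfl, rfl⟩ := exists_finsupp_fin_three a b e
  refine ⟨u, (degree_fin_three u).trans hsum, ?_, ⟨2, ?_, he⟩, ?_⟩
  · rcases Nat.add_pos_iff_pos_or_pos.mp hab with ha | hb
    · exact ⟨0, h₀, ha⟩
    · exact ⟨1, h₁, hb⟩
  · rw [Finsupp.single_eq_same]
    omega
  · rw [weight_mixedPowerExponents_le_iff, Finsupp.sup_apply, Finsupp.sup_apply]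
    simpa [weight_mixedPowerExponents_zero, weight_mixedPowerExponents_one, h₂, mul_add] using
      And.intro ha hb

theorem hasBridge_single_of_ne_two {i : Fin 3} (hi : i ≠ 2) (hn : 2 ≤ n) {w : Fin 3 →₀ ℕ}
    (hw : w.degree = n) : HasBridge (mixedPowerExponents p q) n (Finsupp.single i n) w := by
  obtain ⟨t, ht⟩ : ∃ t, 0 < w t := by
    by_contra! h
    rw [degree_fin_three] at hw
    have h₀ := h 0
    have h₁ := h 1
    have h₂ := h 2
    omega
  refine hasBridge_single hn ht ?_
  fin_cases i <;> fin_cases t <;> simp [Fin.forall_fin_two, mixedPowerExponents] at hi ⊢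

theorem eq_single_of_forall_ne {i : Fin 3} {w : Fin 3 →₀ ℕ} (hw : w.degree = n)
    (h : ∀ t ≠ i, w t = 0) : w = Finsupp.single i n := by
  have hsingle : w = Finsupp.single i (w i) :=
    Finsupp.support_subset_singleton.mp fun t ht => by
      by_contra hti
      exact Finsupp.mem_support_iff.mp ht (h t (by simpa using hti))
  rw [hsingle, Finsupp.degree_single] at hw
  rw [hsingle, hw]

theorem hasBridge_mixedPowerExponents (hn : 2 ≤ n)
    (hbest : ¬ IsOneSidedBestDenominator p (p + q) n) {v w : Fin 3 →₀ ℕ} (hv : v.degree = n)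
    (hw : w.degree = n) : HasBridge (mixedPowerExponents p q) n v w := by
  by_cases hmeets : Meets v w
  · exact hasBridge_of_meets hv hmeets
  have hdisjoint (i : Fin 3) (hi : 0 < w i) : v i = 0 := by
    by_contra hvi
    exact hmeets ⟨i, by omega, hi⟩
  wlog h₂ : w 2 = 0 generalizing v w
  · refine (this hw hv (mt Meets.symm hmeets) (fun i hi => ?_) (hdisjoint 2 (by omega))).symm
    by_contra hwi
    exact hmeets ⟨i, hi, by omega⟩
  rcases Nat.eq_zero_or_pos (w 0) with h₀ | h₀
  · rw [eq_single_of_forall_ne (i := 1) hw (by simp [Fin.forall_fin_succ, h₀, h₂])]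
    exact (hasBridge_single_of_ne_two (by decide) hn hv).symm
  rcases Nat.eq_zero_or_pos (w 1) with h₁ | h₁
  · rw [eq_single_of_forall_ne (i := 0) hw (by simp [Fin.forall_fin_succ, h₁, h₂])]
    exact (hasBridge_single_of_ne_two (by decide) hn hv).symm
  rw [eq_single_of_forall_ne (i := 2) hv
    (by simp [Fin.forall_fin_succ, hdisjoint 0 h₀, hdisjoint 1 h₁])]
  exact (hasBridge_single_two hw h₀ h₁ h₂ hbest).symm

theorem exists_le_of_isOneSidedBestDenominator (hn : 2 ≤ n)
    (hbest : IsOneSidedBestDenominator p (p + q) n) : ∃ i ≤ n, ∀ m c : ℤ, 0 < m → m < n →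
      m * p - c * (p + q) ∉ Set.uIcc 0 (n * p - i * (p + q) : ℤ) := by
  obtain ⟨i, hi⟩ := hbest
  have hi_nonneg : 0 ≤ i := by
    by_contra! hneg
    refine hi 1 0 one_pos (by omega) (Set.mem_uIcc.mpr (.inl ⟨by simp, ?_⟩))
    nlinarith
  have hi_le : i ≤ n := by
    by_contra! hlt
    refine hi 1 1 one_pos (by omega) (Set.mem_uIcc.mpr (.inr ⟨?_, by linarith⟩))
    nlinarith
  lift i to ℕ using hi_nonneg
  exact ⟨i, by omega, hi⟩

theorem displacement_mem_uIcc {i j a b e : ℕ} (hsum : a + b + e = i + j)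
    (ha : (p + q) * a + p * e ≤ max ((p + q) * i) (p * (i + j)))
    (hb : (p + q) * b + q * e ≤ max ((p + q) * j) (q * (i + j))) :
    (e * p - (i - a) * (p + q) : ℤ) ∈ Set.uIcc 0 ((i + j) * p - i * (p + q) : ℤ) := by
  have hb_eq : (b : ℤ) = i + j - a - e := by omega
  zify at ha hb
  rw [hb_eq] at hb
  rw [Set.mem_uIcc]
  rcases le_total (p * j : ℤ) (q * i) with h | h
  · rw [max_eq_left (by linarith)] at ha
    rw [max_eq_right (by linarith)] at hb
    exact .inr ⟨by linarith, by linarith⟩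
  · rw [max_eq_right (by linarith)] at ha
    rw [max_eq_left (by linarith)] at hb
    exact .inl ⟨by linarith, by linarith⟩

theorem eq_single_two_of_weight_le {u w : Fin 3 →₀ ℕ} (hw : w.degree = n) (h₂ : w 2 = 0)
    (hdispl : ∀ m c : ℤ, 0 < m → m < n →
      m * p - c * (p + q) ∉ Set.uIcc 0 (n * p - w 0 * (p + q) : ℤ))
    (hu : u.degree = n) (hu₂ : 0 < u 2)
    (hle : Finsupp.weight (mixedPowerExponents p q) u ≤
      Finsupp.weight (mixedPowerExponents p q) (Finsupp.single 2 n) ⊔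
        Finsupp.weight (mixedPowerExponents p q) w) : u = Finsupp.single 2 n := by
  rw [degree_fin_three] at hu hw
  rw [weight_mixedPowerExponents_le_iff, Finsupp.sup_apply, Finsupp.sup_apply] at hle
  simp only [weight_mixedPowerExponents_zero, weight_mixedPowerExponents_one, h₂] at hle
  rcases (by omega : u 2 ≤ n).eq_or_lt with hu₂n | hu₂n
  · have hu₀ : u 0 = 0 := by omega
    have hu₁ : u 1 = 0 := by omega
    refine eq_single_of_forall_ne ?_ (by simp [Fin.forall_fin_succ, hu₀, hu₁])
    rw [degree_fin_three, hu]
  refine absurd ?_ (hdispl (u 2) (w 0 - u 0) (by omega) (by omega))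
  have hwsum : (n : ℤ) = w 0 + w 1 := by omega
  rw [hwsum]
  refine displacement_mem_uIcc (by omega) (b := u 1) ?_ ?_
  · simpa [← hw, h₂, or_comm] using hle.1
  · simpa [← hw, h₂, or_comm] using hle.2

theorem not_fibreGraph_preconnected_of_isOneSidedBestDenominator (hn : 2 ≤ n)
    (hbest : IsOneSidedBestDenominator p (p + q) n) :
    ∃ μ, ¬ (fibreGraph (mixedPowerExponents p q) n μ).Preconnected := by
  obtain ⟨i, hin, hdispl⟩ := exists_le_of_isOneSidedBestDenominator hn hbest
  obtain ⟨w, rfl, hw₁, hw₂⟩ := exists_finsupp_fin_three i (n - i) 0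
  have hw : w.degree = n := by
    rw [degree_fin_three]
    omega
  let v : Fin 3 →₀ ℕ := Finsupp.single 2 n
  let μ := Finsupp.weight (mixedPowerExponents p q) v ⊔ Finsupp.weight (mixedPowerExponents p q) w
  let v' : fibre (mixedPowerExponents p q) n μ := ⟨v, Finsupp.degree_single _ _, le_sup_left⟩
  let w' : fibre (mixedPowerExponents p q) n μ := ⟨w, hw, le_sup_right⟩
  have hvw : v' ≠ w' := fun h => by
    have hn₂ : n = w 2 := by
      rw [← Finsupp.single_eq_same (a := (2 : Fin 3)) (b := n)]
      exact DFunLike.congr_fun (Subtype.ext_iff.mp h) 2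
    omega
  have : Nontrivial (fibre (mixedPowerExponents p q) n μ) := ⟨v', w', hvw⟩
  refine ⟨μ, fun hconn => ?_⟩
  obtain ⟨u, hvu, t, ht, hut⟩ := hconn.exists_adj_of_nontrivial v'
  have ht₂ : t = 2 := by
    by_contra hne
    exact ht.ne' (Finsupp.single_eq_of_ne hne)
  rw [ht₂] at hut
  exact hvu (Subtype.ext (eq_single_two_of_weight_le hw hw₂ hdispl u.2.1 hut u.2.2).symm)

theorem reesRelStable_mixedPowerExponents_iff {R : Type*} [CommRing R] [Nontrivial R]
    (hn : 2 ≤ n) : reesRelStable (monomialFamily R (mixedPowerExponents p q)) n ↔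
      ¬ IsOneSidedBestDenominator p (p + q) n := by
  rw [reesRelStable_monomialFamily_iff (by omega)]
  refine ⟨fun hconn hbest => ?_, fun hbest μ => ?_⟩
  · obtain ⟨μ, hμ⟩ := not_fibreGraph_preconnected_of_isOneSidedBestDenominator hn hbest
    exact hμ (hconn μ)
  · exact fibreGraph_preconnected_of_hasBridge fun v w => hasBridge_mixedPowerExponents hn hbest

theorem siftedDegrees_mixedPowerExponents (R : Type*) [CommRing R] [Nontrivial R] (p q : ℕ) :
    siftedDegrees (monomialFamily R (mixedPowerExponents p q)) =
      {n : ℕ | 0 < n ∧ IsOneSidedBestDenominator p (p + q) n} := by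
  ext n
  rcases lt_trichotomy n 1 with hn | rfl | hn
  · simp only [siftedDegrees, Set.singleton_union, Set.mem_insert_iff, Set.mem_ofPred_eq]
    omega
  · exact iff_of_true (Or.inl rfl) ⟨one_pos, isOneSidedBestDenominator_one _ _⟩
  · have hn₀ : 0 < n := by omega
    have hn₂ : 2 ≤ n := hn
    simp only [siftedDegrees, Set.singleton_union, Set.mem_insert_iff, Set.mem_ofPred_eq, hn.ne',
      hn₀, hn₂, reesRelStable_mixedPowerExponents_iff, not_not, false_or, true_and]

end ThreeGenerators

section Fibonacci

theorem fib_add_two_mul_fib_add_sub (n j : ℕ) :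
    (Nat.fib (n + 2) * Nat.fib (n + j) - Nat.fib n * Nat.fib (n + j + 2) : ℤ) =
      (-1) ^ n * Nat.fib j := by
  induction n with
  | zero => simp
  | succ n ih =>
    rw [add_right_comm n 1 2, add_right_comm n 1 j, add_right_comm (n + j) 1 2]
    simp only [Nat.fib_add_two, show n + 2 + 1 = n + 1 + 2 from rfl,
      show n + j + 2 + 1 = n + j + 1 + 2 from rfl] at ih ⊢
    push_cast at ih ⊢
    rw [pow_succ]
    linear_combination -ih

theorem isUnit_fib_det (t : ℕ) :
    IsUnit (Nat.fib (t + 2) * Nat.fib (t + 1) - Nat.fib (t + 3) * Nat.fib t : ℤ) := by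
  have hdet := fib_add_two_mul_fib_add_sub t 1
  rw [Nat.fib_one, Nat.cast_one, mul_one] at hdet
  rw [mul_comm (Nat.fib (t + 3) : ℤ), hdet]
  exact isUnit_one.neg.pow t

theorem fib_displacement_ne_zero (t s : ℕ) :
    (Nat.fib (t + 2) * Nat.fib (t + s + 1) - Nat.fib t * Nat.fib (t + s + 3) : ℤ) ≠ 0 := by
  have hdispl := fib_add_two_mul_fib_add_sub t (s + 1)
  rw [← add_assoc] at hdispl
  rw [hdispl]
  have : Nat.fib (s + 1) ≠ 0 := (Nat.fib_pos.mpr s.succ_pos).ne'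
  positivity

theorem fib_displacement_mul_nonpos (t s : ℕ) :
    (Nat.fib (t + 2) * Nat.fib (t + s + 1) - Nat.fib t * Nat.fib (t + s + 3) : ℤ) *
      (Nat.fib (t + 3) * Nat.fib (t + s + 1) - Nat.fib (t + 1) * Nat.fib (t + s + 3)) ≤ 0 := by
  have h₁ := fib_add_two_mul_fib_add_sub t (s + 1)
  have h₂ := fib_add_two_mul_fib_add_sub (t + 1) s
  rw [← add_assoc] at h₁
  rw [add_right_comm t 1 s] at h₂
  have hsq : ((-1) ^ t * (-1) ^ t : ℤ) = 1 := by rw [← mul_pow]; simp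
  calc _ = (-1) ^ t * Nat.fib (s + 1) * ((-1) ^ (t + 1) * Nat.fib s : ℤ) := by rw [← h₁, ← h₂]
    _ = -(Nat.fib (s + 1) * Nat.fib s) := by
      rw [pow_succ]
      linear_combination -(Nat.fib (s + 1) * Nat.fib s : ℤ) * hsq
    _ ≤ 0 := neg_nonpos.mpr (by positivity)

theorem isOneSidedBestDenominator_fib {ℓ i : ℕ} (hi : i ∈ Set.Icc 2 (ℓ + 2)) :
    IsOneSidedBestDenominator (Nat.fib ℓ) (Nat.fib (ℓ + 2)) (Nat.fib i) := by
  obtain ⟨hi₂, hiℓ⟩ := hi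
  obtain rfl | ⟨t, rfl⟩ : i = 2 ∨ ∃ t, i = t + 3 := by
    rcases hi₂.eq_or_lt' with h | h
    · exact .inl h
    · exact .inr ⟨i - 3, by omega⟩
  · exact isOneSidedBestDenominator_one _ _
  · obtain ⟨s, rfl⟩ : ∃ s, ℓ = t + s + 1 := ⟨ℓ - t - 1, by omega⟩
    exact isOneSidedBestDenominator_of_isUnit_det (isUnit_fib_det t)
      (by exact_mod_cast Nat.fib_pos.mpr (by omega)) (fib_displacement_ne_zero t s)
      (fib_displacement_mul_nonpos t s)

theorem not_isOneSidedBestDenominator_of_fib_lt_of_lt_fib {t s n : ℕ}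
    (hn : Nat.fib (t + 3) < n) (hn' : n < Nat.fib (t + 4)) :
    ¬ IsOneSidedBestDenominator (Nat.fib (t + s + 1)) (Nat.fib (t + s + 3)) n := by
  have hpos : 0 < Nat.fib (t + 2) := Nat.fib_pos.mpr (by omega)
  have hmono : Nat.fib (t + 2) ≤ Nat.fib (t + 3) := Nat.fib_le_fib_succ
  have hn_sum : n < Nat.fib (t + 2) + Nat.fib (t + 3) := hn'.trans_eq Nat.fib_add_two
  exact not_isOneSidedBestDenominator_of_isUnit_det (isUnit_fib_det t) (by omega) (by omega)
    (fib_displacement_mul_nonpos t s) (by omega) (by omega) (by omega)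

theorem mem_image_fib_of_isOneSidedBestDenominator {ℓ n : ℕ} (hn : 0 < n)
    (hbest : IsOneSidedBestDenominator (Nat.fib ℓ) (Nat.fib (ℓ + 2)) n) :
    n ∈ Nat.fib '' Set.Icc 2 (ℓ + 2) := by
  have hle : n ≤ Nat.fib (ℓ + 2) := by
    by_contra! hlt
    have hpos : 0 < Nat.fib (ℓ + 2) := Nat.fib_pos.mpr (by omega)
    exact not_isOneSidedBestDenominator_of_lt (by exact_mod_cast hpos) (by exact_mod_cast hlt) hbest
  have hg₂ : 2 ≤ n.greatestFib := Nat.le_greatestFib.mpr hn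
  have hgℓ : n.greatestFib ≤ ℓ + 2 :=
    (Nat.greatestFib_mono hle).trans_eq (Nat.greatestFib_fib (by omega))
  refine ⟨n.greatestFib, ⟨hg₂, hgℓ⟩, ?_⟩
  by_contra hne
  have hlt : Nat.fib n.greatestFib < n := (Nat.fib_greatestFib_le n).lt_of_ne hne
  have hlt' : n < Nat.fib (n.greatestFib + 1) := Nat.lt_fib_greatestFib_add_one n
  generalize n.greatestFib = g at *
  obtain rfl | ⟨t, rfl⟩ : g = 2 ∨ ∃ t, g = t + 3 := by
    rcases hg₂.eq_or_lt' with h | h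
    · exact .inl h
    · exact .inr ⟨g - 3, by omega⟩
  · have : Nat.fib (2 + 1) = Nat.fib 2 + 1 := rfl
    omega
  · obtain ⟨s, rfl⟩ : ∃ s, ℓ = t + s + 1 := ⟨ℓ - t - 1, by omega⟩
    exact not_isOneSidedBestDenominator_of_fib_lt_of_lt_fib hlt hlt' hbest

theorem isOneSidedBestDenominator_fib_iff {ℓ n : ℕ} :
    0 < n ∧ IsOneSidedBestDenominator (Nat.fib ℓ) (Nat.fib (ℓ + 2)) n ↔
      n ∈ Nat.fib '' Set.Icc 2 (ℓ + 2) := by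
  refine ⟨fun h => mem_image_fib_of_isOneSidedBestDenominator h.1 h.2, ?_⟩
  rintro ⟨i, hi, rfl⟩
  exact ⟨Nat.fib_pos.mpr (by linarith [hi.1]), isOneSidedBestDenominator_fib hi⟩

end Fibonacci

section FibonacciIdeal

theorem monomialFamily_mixedPowerExponents (R : Type*) [CommRing R] (p q : ℕ) :
    monomialFamily R (mixedPowerExponents p q) =
      ![X 0 ^ (p + q), X 1 ^ (p + q), X 0 ^ p * X 1 ^ q] := by
  funext i
  fin_cases i <;> simp [monomialFamily, mixedPowerExponents, X_pow_eq_monomial, monomial_mul]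

theorem siftedDegrees_fib (R : Type*) [CommRing R] [Nontrivial R] (ℓ : ℕ) :
    siftedDegrees (monomialFamily R (mixedPowerExponents (Nat.fib ℓ) (Nat.fib (ℓ + 1)))) =
      Nat.fib '' Set.Icc 2 (ℓ + 2) := by
  rw [siftedDegrees_mixedPowerExponents, ← Nat.cast_add, ← Nat.fib_add_two]
  exact Set.ext fun _ => isOneSidedBestDenominator_fib_iff

theorem ncard_image_fib_Icc (m : ℕ) : (Nat.fib '' Set.Icc 2 (m + 2)).ncard = m + 1 := by
  have hinj : Set.InjOn Nat.fib (Set.Icc 2 (m + 2)) :=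
    Nat.fib_strictMonoOn.injOn.mono Set.Icc_subset_Ici_self
  rw [hinj.ncard_image, Set.ncard_eq_toFinset_card', Set.toFinset_Icc, Nat.card_Icc]
  omega

theorem isGreatest_image_fib_Icc (m : ℕ) :
    IsGreatest (Nat.fib '' Set.Icc 2 (m + 2)) (Nat.fib (m + 2)) :=
  Nat.fib_mono.map_isGreatest (isGreatest_Icc (Nat.le_add_left 2 m))

theorem stmt_19_general {R : Type*} [CommRing R] [Nontrivial R] (ℓ : ℕ) :
    let a₁ : MvPolynomial (Fin 2) R := X 0
    let a₂ : MvPolynomial (Fin 2) R := X 1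
    let x : Fin 3 → MvPolynomial (Fin 2) R :=
      ![a₁ ^ Nat.fib (ℓ + 2), a₂ ^ Nat.fib (ℓ + 2), a₁ ^ Nat.fib ℓ * a₂ ^ Nat.fib (ℓ + 1)]
    siftedDegrees x = Nat.fib '' Set.Icc 2 (ℓ + 2) ∧
    siftedType x = ℓ + 1 ∧
    relType x = Nat.fib (ℓ + 2) := by
  intro a₁ a₂ x
  have hx : x = monomialFamily R (mixedPowerExponents (Nat.fib ℓ) (Nat.fib (ℓ + 1))) := by
    rw [monomialFamily_mixedPowerExponents, ← Nat.fib_add_two]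
  have hSD : siftedDegrees x = Nat.fib '' Set.Icc 2 (ℓ + 2) := hx ▸ siftedDegrees_fib R ℓ
  refine ⟨hSD, ?_, relType_eq_of_isGreatest_siftedDegrees ?_⟩
  · rw [siftedType, hSD, ncard_image_fib_Icc]
  · exact hSD ▸ isGreatest_image_fib_Icc ℓ

end FibonacciIdeal

/-- Let `(Fᵢ)` be the Fibonacci sequence, `A = k[a₁,a₂]`, `ℓ ≥ 4`, and
`I = (a₁^{F_{ℓ+2}}, a₂^{F_{ℓ+2}}, a₁^{F_ℓ}a₂^{F_{ℓ+1}})`. Then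
`SD(I) = {Fᵢ : 2 ≤ i ≤ ℓ+2}`; consequently `st(I) = ℓ+1` and `rt(I) = F_{ℓ+2}`. -/
theorem stmt_19 {k : Type*} [Field k] (ℓ : ℕ) (hℓ : 4 ≤ ℓ) :
    let a₁ : MvPolynomial (Fin 2) k := MvPolynomial.X 0
    let a₂ : MvPolynomial (Fin 2) k := MvPolynomial.X 1
    let x : Fin 3 → MvPolynomial (Fin 2) k :=
      ![a₁ ^ Nat.fib (ℓ + 2), a₂ ^ Nat.fib (ℓ + 2),
        a₁ ^ Nat.fib ℓ * a₂ ^ Nat.fib (ℓ + 1)]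
    siftedDegrees x = Nat.fib '' Set.Icc 2 (ℓ + 2) ∧
    siftedType x = ℓ + 1 ∧
    relType x = Nat.fib (ℓ + 2) := by
  exact stmt_19_general ℓ
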